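/- Determinism of Open CbNeed: the reduction →ond on programs is deterministic, i.e., if p →ond q₁ and p →ond q₂ then q₁ = q₂ (up to α-renaming). -/

import Mathlib

/-! ## Terms of the pure λ-calculus (named syntax) -/

inductive Term : Type
  | var : ℕ → Term
  | lam : ℕ → Term → Term
  | app : Term → Term → Term
  deriving DecidableEq

namespace Term

/-- Size of a term: |x| = 1, |λx.t| = |t|+1, |t u| = |t|+|u|+1. -/
def size : Term → ℕ
  | var _ => 1
  | lam _ t => size t + 1
  | app t u => size t + size u + 1

/-- Free variables of a term. -/
def fv : Term → Finset ℕ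
  | var x => {x}
  | lam x t => (fv t).erase x
  | app t u => fv t ∪ fv u

/-- Meta-level substitution t{x←u}. -/
def subst (x : ℕ) (u : Term) : Term → Term
  | var y => if y = x then u else var y
  | lam y t => if y = x then lam y t else lam y (subst x u t)
  | app t s => app (subst x u t) (subst x u s)

def isVarB : Term → Bool
  | var _ => true
  | _ => false

/-- Values are abstractions (variables are not values). -/
def IsValue (t : Term) : Prop := ∃ x u, t = lam x u

/-- Needed variables of a term. -/
def nv : Term → Finset ℕ
  | var x => {x}
  | lam _ _ => ∅
  | app t u => nv t ∪ nv u

/-- Applied variables of a term. -/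
def anv : Term → Finset ℕ
  | var _ => ∅
  | lam _ _ => ∅
  | app (var x) u => insert x (anv u)
  | app (lam y t) u => anv (lam y t) ∪ anv u
  | app (app t s) u => anv (app t s) ∪ anv u

/-- Unapplied variables of a term. -/
def unv : Term → Finset ℕ
  | var x => {x}
  | lam _ _ => ∅
  | app (var _) u => unv u
  | app (lam y t) u => unv (lam y t) ∪ unv u
  | app (app t s) u => unv (app t s) ∪ unv u

end Term

/-! ## Inert terms and fireballs: i ::= x | i f,  f ::= v | i -/

mutual
  inductive Term.Inert : Term → Prop
    | var (x : ℕ) : Term.Inert (Term.var x)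
    | app {i f : Term} : Term.Inert i → Term.Fireball f → Term.Inert (Term.app i f)
  inductive Term.Fireball : Term → Prop
    | val {x : ℕ} {t : Term} : Term.Fireball (Term.lam x t)
    | inert {i : Term} : Term.Inert i → Term.Fireball i
end

/-- Non-variable inert terms i⁺. -/
def Term.InertPlus (t : Term) : Prop := t.Inert ∧ ∀ x, t ≠ Term.var x

/-! ## β-reduction (closure of the root rule under arbitrary term contexts) -/

inductive Beta : Term → Term → Prop
  | beta (x : ℕ) (t u : Term) : Beta (Term.app (Term.lam x t) u) (Term.subst x u t)
  | lam {t t' : Term} (x : ℕ) : Beta t t' → Beta (Term.lam x t) (Term.lam x t')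
  | appL {t t' : Term} (u : Term) : Beta t t' → Beta (Term.app t u) (Term.app t' u)
  | appR {u u' : Term} (t : Term) : Beta u u' → Beta (Term.app t u) (Term.app t u')

/-- `iterRel R n a b`: an n-step R-reduction sequence from a to b. -/
def iterRel {α : Type} (R : α → α → Prop) : ℕ → α → α → Prop
  | 0 => Eq
  | n + 1 => fun a c => ∃ b, R a b ∧ iterRel R n b c

/-! ## Environments and programs -/

/-- Environments are finite lists of explicit substitutions, written
left-to-right, i.e. E[x←t] is `E ++ [(x, t)]`. -/
abbrev Env := List (ℕ × Term)

def Env.dom (E : Env) : Finset ℕ := (E.map Prod.fst).toFinset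

/-- Content of the leftmost explicit substitution on x. -/
def Env.lookupES : Env → ℕ → Option Term
  | [], _ => none
  | (y, t) :: E, x => if y = x then some t else Env.lookupES E x

structure Program where
  tm : Term
  env : Env

/-- p@[x←u] : appending an explicit substitution at the end of the environment. -/
def Program.appES (p : Program) (x : ℕ) (u : Term) : Program := ⟨p.tm, p.env ++ [(x, u)]⟩

/-- One step of the needed-variables computation along an explicit substitution. -/
def nvStep (V : Finset ℕ) (e : ℕ × Term) : Finset ℕ :=
  if e.1 ∈ V then (V.erase e.1) ∪ Term.nv e.2 else V

/-- Needed variables of a program. -/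
def Program.nv (p : Program) : Finset ℕ := p.env.foldl nvStep p.tm.nv

/-- One step of the applied-variables computation (carrying needed variables). -/
def anvStep : Finset ℕ × Finset ℕ → ℕ × Term → Finset ℕ × Finset ℕ
  | (N, A), (x, u) =>
    (nvStep N (x, u),
      if x ∈ N then
        match u with
        | Term.var y => if x ∈ A then (A.erase x) ∪ {y} else A.erase x
        | _ => (A.erase x) ∪ Term.anv u
      else A)

/-- Applied variables of a program. -/
def Program.anv (p : Program) : Finset ℕ :=
  (p.env.foldl anvStep (p.tm.nv, p.tm.anv)).2

/-- One step of the unapplied-variables computation (carrying needed variables). -/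
def unvStep : Finset ℕ × Finset ℕ → ℕ × Term → Finset ℕ × Finset ℕ
  | (N, U), (x, u) =>
    (nvStep N (x, u),
      if x ∈ U ∨ (x ∈ N ∧ u.isVarB = false) then (U.erase x) ∪ Term.unv u else U)

/-- Unapplied variables of a program. -/
def Program.unv (p : Program) : Finset ℕ :=
  (p.env.foldl unvStep (p.tm.nv, p.tm.unv)).2

/-- Unfolding of a program into a term: unf(t, ε) = t, unf(t, E[x←u]) = unf(t, E){x←u}. -/
def Program.unf (p : Program) : Term :=
  p.env.foldl (fun s e => Term.subst e.1 e.2 s) p.tm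

/-! ## Term contexts H ::= ⟨·⟩ | H t | i H (i inert, enforced by WF) -/

inductive HCtx : Type
  | hole : HCtx
  | appL : HCtx → Term → HCtx
  | appR : Term → HCtx → HCtx

namespace HCtx

/-- Well-formedness: in i H, the left part i must be an inert term. -/
def WF : HCtx → Prop
  | hole => True
  | appL H _ => WF H
  | appR i H => Term.Inert i ∧ WF H

def plug : HCtx → Term → Term
  | hole, t => t
  | appL H u, t => Term.app (plug H t) u
  | appR i H, t => Term.app i (plug H t)

def nv : HCtx → Finset ℕ
  | hole => ∅
  | appL H _ => nv H
  | appR i H => Term.nv i ∪ nv H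

def anv : HCtx → Finset ℕ
  | hole => ∅
  | appL H _ => anv H
  | appR i H => Term.anv i ∪ anv H

def unv : HCtx → Finset ℕ
  | hole => ∅
  | appL H _ => unv H
  | appR i H => Term.unv i ∪ unv H

end HCtx

/-- Applicative term contexts H@ ::= ⟨·⟩ t | H@ t | i H@. -/
inductive HCtx.IsApp : HCtx → Prop
  | base (t : Term) : HCtx.IsApp (HCtx.appL HCtx.hole t)
  | appL {H : HCtx} (t : Term) : HCtx.IsApp H → HCtx.IsApp (HCtx.appL H t)
  | appR {H : HCtx} {i : Term} : Term.Inert i → HCtx.IsApp H → HCtx.IsApp (HCtx.appR i H)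

/-! ## Program contexts: hole in the term part (tc) or inside an ES (ec) -/

inductive PCtx : Type
  | tc : HCtx → Env → PCtx
  | ec : Term → Env → ℕ → HCtx → Env → PCtx

namespace PCtx

/-- P@[x←u] : appending an explicit substitution at the end of the environment of P. -/
def appES : PCtx → ℕ → Term → PCtx
  | tc H E, x, u => tc H (E ++ [(x, u)])
  | ec t E1 y H E2, x, u => ec t E1 y H (E2 ++ [(x, u)])

/-- Plugging a term into a program context. -/
def plugT : PCtx → Term → Program
  | tc H E, t => ⟨H.plug t, E⟩
  | ec u E1 x H E2, t => ⟨u, E1 ++ (x, H.plug t) :: E2⟩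

/-- Plugging a program into a program context: the plugged environment is appended
right after the position of the hole. -/
def plugP : PCtx → Program → Program
  | tc H E, q => ⟨H.plug q.tm, q.env ++ E⟩
  | ec u E1 x H E2, q => ⟨u, E1 ++ (x, H.plug q.tm) :: (q.env ++ E2)⟩

/-- Variables bound by the environment of P. -/
def dom : PCtx → Finset ℕ
  | tc _ E => Env.dom E
  | ec _ E1 y _ E2 => insert y (Env.dom E1 ∪ Env.dom E2)

/-- P(x): content of the leftmost explicit substitution on x occurring after the hole. -/
def lookup : PCtx → ℕ → Option Term
  | tc _ E, x => Env.lookupES E x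
  | ec _ _ _ _ E2, x => Env.lookupES E2 x

/-- (P⟨x⟩)@[x←H] : plug the variable x in the hole of P and append the ES [x←H],
whose content H now contains the hole. -/
def hered (P : PCtx) (x : ℕ) (H : HCtx) : PCtx :=
  ec (P.plugT (Term.var x)).tm (P.plugT (Term.var x)).env x H []

end PCtx

/-! ## Open CbNeed evaluation contexts P ∈ E_V -/

inductive OEC : PCtx → Finset ℕ → Prop
  | ax {H : HCtx} : H.WF → OEC (PCtx.tc H []) H.nv
  | gc {P : PCtx} {V : Finset ℕ} {x : ℕ} (t : Term) :
      OEC P V → x ∉ V → x ∉ P.dom → OEC (P.appES x t) V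
  | inert {P : PCtx} {V : Finset ℕ} {x : ℕ} {i : Term} :
      OEC P V → x ∈ V → Term.Inert i → x ∉ P.dom →
      OEC (P.appES x i) ((V.erase x) ∪ i.nv)
  | her {P : PCtx} {V : Finset ℕ} {x : ℕ} {H : HCtx} :
      OEC P V → x ∉ V → x ∉ P.dom → H.WF →
      OEC (P.hered x H) (V ∪ H.nv)

/-! ## Open CbNeed reduction -/

inductive StepOM : Program → Program → Prop
  | mk {P : PCtx} {V : Finset ℕ} {x : ℕ} {t u : Term} :
      OEC P V →
      StepOM (P.plugT (Term.app (Term.lam x t) u)) (P.plugP ⟨t, [(x, u)]⟩)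

inductive StepOE : Program → Program → Prop
  | mk {P : PCtx} {V : Finset ℕ} {x : ℕ} {v : Term} :
      OEC P V → P.lookup x = some v → v.IsValue →
      StepOE (P.plugT (Term.var x)) (P.plugT v)

def StepOnd (p q : Program) : Prop := StepOM p q ∨ StepOE p q

/-! ## Open CbNeed normal programs -/

inductive PInert : Program → Prop
  | ax {i : Term} : i.Inert → PInert ⟨i, []⟩
  | inert {p : Program} {x : ℕ} {i : Term} :
      PInert p → x ∈ p.nv → i.Inert → PInert (p.appES x i)
  | gc {p : Program} {x : ℕ} (t : Term) :
      PInert p → x ∉ p.nv → PInert (p.appES x t)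

inductive PAbs : Program → Prop
  | ax {v : Term} : v.IsValue → PAbs ⟨v, []⟩
  | gc {p : Program} {x : ℕ} (t : Term) : PAbs p → PAbs (p.appES x t)

def ONorm (p : Program) : Prop := PInert p ∨ PAbs p

/-! ## Useful Open CbNeed: multiplicative and exponential evaluation contexts -/

def upd (S : Finset ℕ) (x y : ℕ) : Finset ℕ := if x ∈ S then (S.erase x) ∪ {y} else S

inductive MEC : PCtx → Finset ℕ → Finset ℕ → Prop
  | ax {H : HCtx} : H.WF → MEC (PCtx.tc H []) H.unv H.anv
  | var {P : PCtx} {U A : Finset ℕ} {x y : ℕ} :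
      MEC P U A → x ∈ U ∪ A → x ∉ P.dom →
      MEC (P.appES x (Term.var y)) (upd U x y) (upd A x y)
  | gc {P : PCtx} {U A : Finset ℕ} {x : ℕ} (t : Term) :
      MEC P U A → x ∉ U ∪ A → x ∉ P.dom → MEC (P.appES x t) U A
  | inert {P : PCtx} {U A : Finset ℕ} {x : ℕ} {i : Term} :
      MEC P U A → x ∈ U ∪ A → i.InertPlus → x ∉ P.dom →
      MEC (P.appES x i) ((U.erase x) ∪ i.unv) ((A.erase x) ∪ i.anv)
  | val {P : PCtx} {U A : Finset ℕ} {x : ℕ} {v : Term} :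
      MEC P U A → x ∈ U → x ∉ A → v.IsValue → x ∉ P.dom →
      MEC (P.appES x v) (U.erase x) A
  | her {P : PCtx} {U A : Finset ℕ} {x : ℕ} {H : HCtx} :
      MEC P U A → x ∉ U ∪ A → x ∉ P.dom → H.WF →
      MEC (P.hered x H) (U ∪ H.unv) (A ∪ H.anv)

/-- Exponential evaluation contexts P ∈ E@_{U,A}; the last (natural number) index
counts the number of applications of rule (e_NA) in the derivation. -/
inductive EEC : PCtx → Finset ℕ → Finset ℕ → ℕ → Prop
  | ax1 {H : HCtx} : H.IsApp → EEC (PCtx.tc H []) H.unv H.anv 0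
  | ax2 {P : PCtx} {U A : Finset ℕ} {x : ℕ} {H : HCtx} :
      MEC P U A → x ∉ U ∪ A → x ∉ P.dom → H.IsApp →
      EEC (P.hered x H) ((U.erase x) ∪ H.unv) (A ∪ H.anv) 0
  | var {P : PCtx} {U A : Finset ℕ} {k : ℕ} {x y : ℕ} :
      EEC P U A k → x ∈ U ∪ A → x ∉ P.dom →
      EEC (P.appES x (Term.var y)) (upd U x y) (upd A x y) k
  | inert {P : PCtx} {U A : Finset ℕ} {k : ℕ} {x : ℕ} {i : Term} :
      EEC P U A k → x ∈ U ∪ A → i.InertPlus → x ∉ P.dom →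
      EEC (P.appES x i) ((U.erase x) ∪ i.unv) ((A.erase x) ∪ i.anv) k
  | gc {P : PCtx} {U A : Finset ℕ} {k : ℕ} {x : ℕ} (t : Term) :
      EEC P U A k → x ∉ U ∪ A → x ∉ P.dom → EEC (P.appES x t) U A k
  | val {P : PCtx} {U A : Finset ℕ} {k : ℕ} {x : ℕ} {v : Term} :
      EEC P U A k → x ∈ U → x ∉ A → v.IsValue → x ∉ P.dom →
      EEC (P.appES x v) (U.erase x) A k
  | na {P : PCtx} {U A : Finset ℕ} {k : ℕ} {x : ℕ} :
      EEC P U A k → x ∉ A → x ∉ P.dom →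
      EEC (P.hered x HCtx.hole) (U.erase x) A (k + 1)

/-! ## Useful Open CbNeed reduction -/

inductive StepUM : Program → Program → Prop
  | mk {P : PCtx} {U A : Finset ℕ} {x : ℕ} {t u : Term} :
      MEC P U A →
      StepUM (P.plugT (Term.app (Term.lam x t) u)) (P.plugP ⟨t, [(x, u)]⟩)

inductive StepUE : Program → Program → Prop
  | mk {P : PCtx} {U A : Finset ℕ} {k : ℕ} {x : ℕ} {v : Term} :
      EEC P U A k → P.lookup x = some v → v.IsValue →
      StepUE (P.plugT (Term.var x)) (P.plugT v)

def StepUnd (p q : Program) : Prop := StepUM p q ∨ StepUE p q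

/-- Useful multiplicative steps whose evaluation context lies in Em_{U,A}. -/
def StepUMat (U A : Finset ℕ) (p q : Program) : Prop :=
  ∃ (P : PCtx) (x : ℕ) (t u : Term), MEC P U A ∧
    p = P.plugT (Term.app (Term.lam x t) u) ∧ q = P.plugP ⟨t, [(x, u)]⟩

/-- Useful exponential steps whose evaluation context lies in E@_{U,A}. -/
def StepUEat (U A : Finset ℕ) (p q : Program) : Prop :=
  ∃ (P : PCtx) (k : ℕ) (x : ℕ) (v : Term), EEC P U A k ∧
    P.lookup x = some v ∧ v.IsValue ∧
    p = P.plugT (Term.var x) ∧ q = P.plugT v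

/-! ## Useful normal-form predicates -/

inductive GenVar : ℕ → Program → Prop
  | ax (x : ℕ) : GenVar x ⟨Term.var x, []⟩
  | her {x : ℕ} {p : Program} (y : ℕ) : GenVar x p → GenVar y (p.appES x (Term.var y))
  | gc {x z : ℕ} {p : Program} (t : Term) : GenVar x p → z ≠ x → GenVar x (p.appES z t)

inductive UfAbs : Program → Prop
  | ax {v : Term} : v.IsValue → UfAbs ⟨v, []⟩
  | gv {p : Program} {x : ℕ} {v : Term} : GenVar x p → v.IsValue → UfAbs (p.appES x v)
  | gc {p : Program} {x : ℕ} (t : Term) : UfAbs p → UfAbs (p.appES x t)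

inductive UfInert : Program → Prop
  | ax {i : Term} : i.InertPlus → UfInert ⟨i, []⟩
  | gv {p : Program} {x : ℕ} {i : Term} : GenVar x p → i.InertPlus → UfInert (p.appES x i)
  | inert {p : Program} {x : ℕ} {i : Term} :
      UfInert p → x ∈ p.nv → i.Inert → UfInert (p.appES x i)
  | useless {p : Program} {x : ℕ} {v : Term} :
      UfInert p → x ∈ p.unv → x ∉ p.anv → v.IsValue → UfInert (p.appES x v)
  | gc {p : Program} {x : ℕ} (t : Term) : UfInert p → x ∉ p.nv → UfInert (p.appES x t)

def UfNorm (p : Program) : Prop := UfInert p ∨ UfAbs p ∨ ∃ x, GenVar x p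

/-! ## The size-exploding family -/

/-- t₁ := λx.λy. y x x  (x := 0, y := 1). -/
def t1 : Term := Term.lam 0 (Term.lam 1 (Term.app (Term.app (Term.var 1) (Term.var 0)) (Term.var 0)))

/-- λy. y x x. -/
def tbody : Term := Term.lam 1 (Term.app (Term.app (Term.var 1) (Term.var 0)) (Term.var 0))

/-- The family t_n (values for n ≥ 1; tfam 0 is a dummy). -/
def tfam : ℕ → Term
  | 0 => t1
  | 1 => t1
  | n + 2 => Term.lam 0 (Term.app (tfam (n + 1)) tbody)

/-- I := λz.z. -/
def Idt : Term := Term.lam 2 (Term.var 2)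

/-- The family u_n : u₀ = I, u_{n+1} = λy. y u_n u_n. -/
def ufam : ℕ → Term
  | 0 => Idt
  | n + 1 => Term.lam 1 (Term.app (Term.app (Term.var 1) (ufam n)) (ufam n))

/-!
Call a focus of a program `p` any way of writing it as `P⟨r⟩` with `P ∈ E_V` and `r` a β-redex or a
variable which the environment after the hole either binds to a value or does not bind. Evaluation
contexts explore `p` in a fixed order, and the index `V` records the variables gone through so far.
Hence, of two distinct foci, one has been passed over by the other. A β-redex cannot be passed over,
since inert terms have no redex in evaluation position; nor can a variable bound to a value, since a
substitution on a needed variable is passed over only if it contains an inert term. So only unbound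
variables are passed over, and these do not reduce: two steps from `p` share their focus, which
determines the result.
-/

namespace Term

/-- The terms that can fill the hole of an evaluation context in a reduction step: β-redexes and
variables. -/
inductive IsFocusable : Term → Prop
  | beta (x : ℕ) (t u : Term) : IsFocusable (app (lam x t) u)
  | var (x : ℕ) : IsFocusable (var x)

/-- `r`, reached after going through the needed variables `V`, is a variable that an evaluation
context with needed variables `W` has gone through as well. -/
def PassedOver (r : Term) (V W : Finset ℕ) : Prop := ∃ x, r = var x ∧ insert x V ⊆ W

variable {r t u : Term}

theorem PassedOver.mono {V W W' : Finset ℕ} (h : r.PassedOver V W) (hW : W ⊆ W') :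
    r.PassedOver V W' := by
  obtain ⟨x, rfl, hx⟩ := h
  exact ⟨x, rfl, hx.trans hW⟩

theorem PassedOver.union_left {V W : Finset ℕ} (h : r.PassedOver V W) (U : Finset ℕ) :
    r.PassedOver (U ∪ V) (U ∪ W) := by
  obtain ⟨x, rfl, hx⟩ := h
  exact ⟨x, rfl, Finset.union_insert x U V ▸ Finset.union_subset_union_right hx⟩

theorem inert_app_iff : (app t u).Inert ↔ t.Inert ∧ u.Fireball :=
  ⟨fun | .app ht hu => ⟨ht, hu⟩, fun h => .app h.1 h.2⟩

theorem IsValue.not_inert (ht : t.IsValue) : ¬ t.Inert := by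
  obtain ⟨x, t, rfl⟩ := ht
  exact nofun

theorem Fireball.isValue_or_inert : t.Fireball → t.IsValue ∨ t.Inert
  | .val => .inl ⟨_, _, rfl⟩
  | .inert h => .inr h

theorem IsFocusable.eq_var_of_inert (hr : r.IsFocusable) (h : r.Inert) : ∃ x, r = .var x := by
  cases hr with
  | beta x t u => exact absurd (inert_app_iff.1 h).1 (IsValue.not_inert ⟨x, t, rfl⟩)
  | var x => exact ⟨x, rfl⟩

theorem isFocusable_app_iff : (app t u).IsFocusable ↔ t.IsValue :=
  ⟨fun | .beta x t _ => ⟨x, t, rfl⟩, fun ⟨x, t, h⟩ => h ▸ .beta x t u⟩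

end Term

namespace HCtx

variable {H H₁ H₂ : HCtx} {r r₁ r₂ : Term}

theorem not_isValue_plug (hr : r.IsFocusable) : ¬ (H.plug r).IsValue := by
  rintro ⟨x, t, h⟩
  cases hr <;> cases H <;> simp only [plug, reduceCtorEq] at h

theorem passedOver_of_inert_plug (hr : r.IsFocusable) (h : (H.plug r).Inert) :
    r.PassedOver H.nv (H.plug r).nv := by
  induction H with
  | hole =>
    obtain ⟨x, rfl⟩ := hr.eq_var_of_inert h
    exact ⟨x, rfl, subset_rfl⟩
  | appL H u ih => exact (ih (Term.inert_app_iff.1 h).1).mono Finset.subset_union_left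
  | appR i H ih =>
    have hHr : (H.plug r).Fireball := (Term.inert_app_iff.1 h).2
    exact (ih (hHr.isValue_or_inert.resolve_left (not_isValue_plug hr))).union_left i.nv

theorem eq_hole_of_isFocusable_plug (hH : H.WF) (hr : r.IsFocusable)
    (h : (H.plug r).IsFocusable) : H = hole := by
  cases H with
  | hole => rfl
  | appL H u => exact absurd (Term.isFocusable_app_iff.1 h) (not_isValue_plug hr)
  | appR i H => exact absurd hH.1 (Term.isFocusable_app_iff.1 h).not_inert

theorem plug_trichotomy (hr₁ : r₁.IsFocusable) (hr₂ : r₂.IsFocusable) (hH₁ : H₁.WF)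
    (hH₂ : H₂.WF) (h : H₁.plug r₁ = H₂.plug r₂) :
    (H₁ = H₂ ∧ r₁ = r₂) ∨ r₁.PassedOver H₁.nv H₂.nv ∨ r₂.PassedOver H₂.nv H₁.nv := by
  induction H₁ generalizing H₂ with
  | hole =>
    obtain rfl := eq_hole_of_isFocusable_plug hH₂ hr₂ (h ▸ hr₁)
    exact .inl ⟨rfl, h⟩
  | appL H₁ s₁ ih =>
    cases H₂ with
    | hole => cases eq_hole_of_isFocusable_plug hH₁ hr₁ (h ▸ hr₂)
    | appL H₂ s₂ =>
      obtain ⟨hplug, rfl⟩ := Term.app.inj h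
      exact (ih (H₂ := H₂) hH₁ hH₂ hplug).imp_left (And.imp_left (congrArg (appL · s₁)))
    | appR i H₂ =>
      obtain ⟨rfl, -⟩ := Term.app.inj h
      exact .inr (.inl ((passedOver_of_inert_plug hr₁ hH₂.1).mono Finset.subset_union_left))
  | appR i H₁ ih =>
    cases H₂ with
    | hole => cases eq_hole_of_isFocusable_plug hH₁ hr₁ (h ▸ hr₂)
    | appL H₂ s₂ =>
      obtain ⟨rfl, -⟩ := Term.app.inj h
      exact .inr (.inr ((passedOver_of_inert_plug hr₂ hH₁.1).mono Finset.subset_union_left))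
    | appR i' H₂ =>
      obtain ⟨rfl, hplug⟩ := Term.app.inj h
      exact (ih hH₁.2 hH₂.2 hplug).imp (And.imp_left (congrArg (appR i)))
        (Or.imp (·.union_left i.nv) (·.union_left i.nv))

end HCtx

section nvStep

variable {V W : Finset ℕ} {x : ℕ} {u : Term}

theorem nvStep_of_mem (h : x ∈ V) : nvStep V (x, u) = V.erase x ∪ u.nv := if_pos h

theorem nvStep_of_notMem (h : x ∉ V) : nvStep V (x, u) = V := if_neg h

theorem erase_subset_nvStep : V.erase x ⊆ nvStep V (x, u) := by
  by_cases h : x ∈ V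
  · rw [nvStep_of_mem h]
    exact Finset.subset_union_left
  · rw [nvStep_of_notMem h]
    exact Finset.erase_subset _ _

theorem nvStep_mono (hVW : V ⊆ W) : nvStep V (x, u) ⊆ nvStep W (x, u) := by
  by_cases h : x ∈ V
  · rw [nvStep_of_mem h, nvStep_of_mem (hVW h)]
    gcongr
  · rw [nvStep_of_notMem h, ← Finset.erase_eq_of_notMem h]
    exact (Finset.erase_subset_erase _ hVW).trans erase_subset_nvStep

end nvStep

theorem Env.lookupES_eq_findSome? (E : Env) (x : ℕ) :
    E.lookupES x = E.findSome? fun e => if e.1 = x then some e.2 else none := by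
  induction E with
  | nil => rfl
  | cons e E ih =>
    simp only [lookupES, ih, List.findSome?_cons]
    split_ifs <;> rfl

theorem Env.lookupES_eq_none {E : Env} {x : ℕ} (h : x ∉ E.dom) : E.lookupES x = none := by
  rw [lookupES_eq_findSome?, List.findSome?_eq_none_iff]
  rw [dom, List.mem_toFinset, List.mem_map] at h
  exact fun e he => if_neg fun hex => h ⟨e, he, hex⟩

namespace Program

theorem appES_inj {p q : Program} {x y : ℕ} {u s : Term} :
    p.appES x u = q.appES y s ↔ p = q ∧ x = y ∧ u = s := by
  cases p
  cases q
  simp [appES, and_assoc]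

theorem appES_ne_mk_nil (p : Program) (x : ℕ) (u t : Term) : p.appES x u ≠ ⟨t, []⟩ := by
  simp [appES]

theorem appES_induction {motive : Program → Prop} (nil : ∀ t, motive ⟨t, []⟩)
    (appES : ∀ p x u, motive p → motive (p.appES x u)) : ∀ p, motive p
  | ⟨t, E⟩ => by
    induction E using List.reverseRecOn with
    | nil => exact nil t
    | append_singleton E e ih => exact appES ⟨t, E⟩ e.1 e.2 ih

end Program

namespace PCtx

variable {P P₁ P₂ : PCtx} {V V₁ V₂ V' W : Finset ℕ} {H : HCtx} {x : ℕ} {r r₁ r₂ u : Term}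

theorem plugT_appES (P : PCtx) (x : ℕ) (u r : Term) :
    (P.appES x u).plugT r = (P.plugT r).appES x u := by
  cases P <;> simp [appES, plugT, Program.appES]

theorem plugT_hered (P : PCtx) (x : ℕ) (H : HCtx) (r : Term) :
    (P.hered x H).plugT r = (P.plugT (.var x)).appES x (H.plug r) := rfl

theorem lookup_appES (P : PCtx) (x : ℕ) (u : Term) (y : ℕ) :
    (P.appES x u).lookup y = (P.lookup y).or (if x = y then some u else none) := by
  cases P <;> simp [appES, lookup, Env.lookupES_eq_findSome?, List.findSome?_append]

theorem lookup_eq_none (h : x ∉ P.dom) : P.lookup x = none := by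
  cases P with
  | tc H E => exact Env.lookupES_eq_none h
  | ec t E₁ y H E₂ =>
    simp only [dom, Finset.mem_insert, Finset.mem_union, not_or] at h
    exact Env.lookupES_eq_none h.2.2

/-- If `r` is a variable bound by the environment after the hole of `P`, it is bound to a value. -/
def Live (P : PCtx) (r : Term) : Prop := ∀ x u, r = .var x → P.lookup x = some u → u.IsValue

theorem live_var (h : P.lookup x = none) : P.Live (.var x) := by
  rintro y u ⟨⟩ hu
  simp [h] at hu

theorem Live.of_appES (h : (P.appES x u).Live r) : P.Live r :=
  fun y v hr hv => h y v hr (by rw [lookup_appES, hv, Option.some_or])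

theorem Live.isValue_of_appES (h : (P.appES x u).Live (.var x)) (hx : P.lookup x = none) :
    u.IsValue :=
  h x u rfl (by simp [lookup_appES, hx])

/-- The focus `r` of `P⟨r⟩`, where `P ∈ E_V`, is a variable unbound after the hole that an
evaluation context with needed variables `W` has gone through as well. -/
def PassedOver (P : PCtx) (V : Finset ℕ) (r : Term) (W : Finset ℕ) : Prop :=
  ∃ x, r = .var x ∧ P.lookup x = none ∧ insert x V ⊆ W

theorem PassedOver.mono {W' : Finset ℕ} (h : P.PassedOver V r W) (hW : W ⊆ W') :
    P.PassedOver V r W' := by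
  obtain ⟨x, rfl, hx, hxW⟩ := h
  exact ⟨x, rfl, hx, hxW.trans hW⟩

theorem PassedOver.appES (h : P.PassedOver V r W) (hlive : (P.appES x u).Live r)
    (hu : x ∈ W → u.Inert) : (P.appES x u).PassedOver (nvStep V (x, u)) r (nvStep W (x, u)) := by
  obtain ⟨y, rfl, hy, hyW, hVW⟩ : ∃ y, r = .var y ∧ P.lookup y = none ∧ y ∈ W ∧ V ⊆ W := by
    simpa only [PassedOver, Finset.insert_subset_iff] using h
  have hyx : y ≠ x := by
    rintro rfl
    exact (hlive.isValue_of_appES hy).not_inert (hu hyW)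
  exact ⟨y, rfl, by simp [lookup_appES, hy, hyx.symm], Finset.insert_subset
    (erase_subset_nvStep (Finset.mem_erase.2 ⟨hyx, hyW⟩)) (nvStep_mono hVW)⟩

theorem passedOver_hered (hr : r.PassedOver H.nv V') (hVV' : V ∪ V' ⊆ W) :
    (P.hered x H).PassedOver (V ∪ H.nv) r W := by
  obtain ⟨y, rfl, hy⟩ := (hr.union_left V).mono hVV'
  exact ⟨y, rfl, rfl, hy⟩

/-- One context enters the substitution on `x` and the other skips it: which of the two is ahead
depends on whether the latter had already gone through the occurrence of `x` leading into it. -/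
theorem passedOver_hered_or_appES (hr₁ : r₁.IsFocusable) (hx : x ∉ V₁)
    (hxP₁ : P₁.lookup x = none) (hu : x ∈ V₂ → (H.plug r₁).Inert)
    (hlive : (P₂.appES x (H.plug r₁)).Live r₂)
    (h : (P₁ = P₂ ∧ V₁ = V₂ ∧ .var x = r₂) ∨ P₁.PassedOver V₁ (.var x) V₂ ∨
      P₂.PassedOver V₂ r₂ V₁) :
    (P₁.hered x H).PassedOver (V₁ ∪ H.nv) r₁ (nvStep V₂ (x, H.plug r₁)) ∨
      (P₂.appES x (H.plug r₁)).PassedOver (nvStep V₂ (x, H.plug r₁)) r₂ (V₁ ∪ H.nv) := by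
  rcases h with ⟨rfl, rfl, rfl⟩ | ⟨y, ⟨⟩, -, hxV₂⟩ | h
  · exact absurd (hlive.isValue_of_appES hxP₁) (HCtx.not_isValue_plug hr₁)
  · obtain ⟨hxV₂, hV⟩ := Finset.insert_subset_iff.1 hxV₂
    refine .inl (passedOver_hered (HCtx.passedOver_of_inert_plug hr₁ (hu hxV₂)) ?_)
    rw [nvStep_of_mem hxV₂]
    exact Finset.union_subset_union_left (Finset.subset_erase.2 ⟨hV, hx⟩)
  · have hpass := h.appES hlive fun hxV₁ => absurd hxV₁ hx
    rw [nvStep_of_notMem hx] at hpass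
    exact .inr (hpass.mono Finset.subset_union_left)

end PCtx

/-- `P` and `r` single out a place of `p = P⟨r⟩` where evaluation, having gone through the needed
variables `V`, may take a step or find an unbound variable. -/
structure Focus (p : Program) (P : PCtx) (V : Finset ℕ) (r : Term) : Prop where
  ctx : OEC P V
  plug : P.plugT r = p
  focusable : r.IsFocusable
  live : P.Live r

namespace Focus

variable {p : Program} {P P₁ P₂ : PCtx} {V V₁ V₂ : Finset ℕ} {r r₁ r₂ t u : Term} {x : ℕ}

theorem of_nil (F : Focus ⟨t, []⟩ P V r) :
    ∃ H : HCtx, P = .tc H [] ∧ V = H.nv ∧ H.WF ∧ H.plug r = t := by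
  obtain ⟨hP, hp, -, -⟩ := F
  cases hP with
  | ax hH => exact ⟨_, rfl, rfl, hH, (Program.mk.inj hp).1⟩
  | gc =>
    rw [PCtx.plugT_appES] at hp
    exact absurd hp (Program.appES_ne_mk_nil _ _ _ _)
  | inert =>
    rw [PCtx.plugT_appES] at hp
    exact absurd hp (Program.appES_ne_mk_nil _ _ _ _)
  | her => exact absurd hp (Program.appES_ne_mk_nil _ _ _ _)

theorem of_appES (F : Focus (p.appES x u) P V r) :
    (∃ P' V', P = P'.appES x u ∧ V = nvStep V' (x, u) ∧ (x ∈ V' → u.Inert) ∧ Focus p P' V' r) ∨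
    ∃ P' V' H, P = P'.hered x H ∧ V = V' ∪ H.nv ∧ x ∉ V' ∧ P'.lookup x = none ∧ H.WF ∧
      H.plug r = u ∧ Focus p P' V' (.var x) := by
  obtain ⟨hP, hp, hr, hlive⟩ := F
  cases hP with
  | ax => exact absurd hp.symm (Program.appES_ne_mk_nil _ _ _ _)
  | gc s hP hx =>
    rw [PCtx.plugT_appES, Program.appES_inj] at hp
    obtain ⟨hp, rfl, rfl⟩ := hp
    exact .inl ⟨_, _, rfl, (nvStep_of_notMem hx).symm, (absurd · hx), hP, hp, hr,
      hlive.of_appES⟩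
  | inert hP hx hi =>
    rw [PCtx.plugT_appES, Program.appES_inj] at hp
    obtain ⟨hp, rfl, rfl⟩ := hp
    exact .inl ⟨_, _, rfl, (nvStep_of_mem hx).symm, fun _ => hi, hP, hp, hr,
      hlive.of_appES⟩
  | her hP hx hxP hH =>
    rw [PCtx.plugT_hered, Program.appES_inj] at hp
    obtain ⟨hp, rfl, rfl⟩ := hp
    have hlookup := PCtx.lookup_eq_none hxP
    exact .inr ⟨_, _, _, rfl, rfl, hx, hlookup, hH, rfl, hP, hp, .var _, PCtx.live_var hlookup⟩

theorem trichotomy (F₁ : Focus p P₁ V₁ r₁) (F₂ : Focus p P₂ V₂ r₂) :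
    (P₁ = P₂ ∧ V₁ = V₂ ∧ r₁ = r₂) ∨ P₁.PassedOver V₁ r₁ V₂ ∨ P₂.PassedOver V₂ r₂ V₁ := by
  induction p using Program.appES_induction generalizing P₁ P₂ V₁ V₂ r₁ r₂ with
  | nil t =>
    obtain ⟨H₁, rfl, rfl, hH₁, h₁⟩ := F₁.of_nil
    obtain ⟨H₂, rfl, rfl, hH₂, h₂⟩ := F₂.of_nil
    rcases HCtx.plug_trichotomy F₁.focusable F₂.focusable hH₁ hH₂ (h₁.trans h₂.symm) with
      ⟨rfl, rfl⟩ | ⟨x, rfl, hx⟩ | ⟨x, rfl, hx⟩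
    · exact .inl ⟨rfl, rfl, rfl⟩
    · exact .inr (.inl ⟨x, rfl, rfl, hx⟩)
    · exact .inr (.inr ⟨x, rfl, rfl, hx⟩)
  | appES p x u ih =>
    rcases F₁.of_appES with ⟨P₁, V₁, rfl, rfl, hu₁, G₁⟩ |
        ⟨P₁, V₁, H₁, rfl, rfl, hx₁, hlookup₁, hH₁, h₁, G₁⟩ <;>
      rcases F₂.of_appES with ⟨P₂, V₂, rfl, rfl, hu₂, G₂⟩ |
        ⟨P₂, V₂, H₂, rfl, rfl, hx₂, hlookup₂, hH₂, h₂, G₂⟩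
    · rcases ih G₁ G₂ with ⟨rfl, rfl, rfl⟩ | h | h
      · exact .inl ⟨rfl, rfl, rfl⟩
      · exact .inr (.inl (h.appES F₁.live hu₂))
      · exact .inr (.inr (h.appES F₂.live hu₁))
    · subst h₂
      exact .inr (PCtx.passedOver_hered_or_appES F₂.focusable hx₂ hlookup₂ hu₁ F₁.live
        (ih G₂ G₁)).symm
    · subst h₁
      exact .inr (PCtx.passedOver_hered_or_appES F₁.focusable hx₁ hlookup₁ hu₂ F₂.live (ih G₁ G₂))
    · rcases ih G₁ G₂ with ⟨rfl, rfl, -⟩ | ⟨y, ⟨⟩, -, hx⟩ | ⟨y, ⟨⟩, -, hx⟩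
      · rcases HCtx.plug_trichotomy F₁.focusable F₂.focusable hH₁ hH₂ (h₁.trans h₂.symm) with
          ⟨rfl, rfl⟩ | h | h
        · exact .inl ⟨rfl, rfl, rfl⟩
        · exact .inr (.inl (PCtx.passedOver_hered h subset_rfl))
        · exact .inr (.inr (PCtx.passedOver_hered h subset_rfl))
      · exact absurd (hx (Finset.mem_insert_self x V₁)) hx₂
      · exact absurd (hx (Finset.mem_insert_self x V₂)) hx₁

end Focus

/-- `Contracts P r q`: reducing `r` in the program context `P` yields `q`. -/
inductive Contracts (P : PCtx) : Term → Program → Prop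
  | beta (x : ℕ) (t u : Term) : Contracts P (.app (.lam x t) u) (P.plugP ⟨t, [(x, u)]⟩)
  | subst {x : ℕ} {v : Term} (hx : P.lookup x = some v) (hv : v.IsValue) :
      Contracts P (.var x) (P.plugT v)

namespace Contracts

variable {P : PCtx} {r : Term} {q q₁ q₂ : Program}

theorem unique (h₁ : Contracts P r q₁) (h₂ : Contracts P r q₂) : q₁ = q₂ := by
  cases h₁ with
  | beta => cases h₂; rfl
  | subst hx₁ => cases h₂ with
    | subst hx₂ => rw [Option.some.inj (hx₁.symm.trans hx₂)]

theorem isFocusable : Contracts P r q → r.IsFocusable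
  | beta x t u => .beta x t u
  | subst _ _ => .var _

theorem live (h : Contracts P r q) : P.Live r := by
  rintro y u rfl hu
  cases h with
  | subst hx hv => rwa [← Option.some.inj (hx.symm.trans hu)]

theorem not_passedOver {V W : Finset ℕ} (h : Contracts P r q) : ¬ P.PassedOver V r W := by
  rintro ⟨x, rfl, hnone, -⟩
  cases h with
  | subst hx => simp [hnone] at hx

end Contracts

theorem StepOnd.exists_focus {p q : Program} (h : StepOnd p q) :
    ∃ P V r, Focus p P V r ∧ Contracts P r q := by
  obtain ⟨P, V, r, hP, hp, hq⟩ : ∃ P V r, OEC P V ∧ P.plugT r = p ∧ Contracts P r q := by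
    rcases h with h | h
    · obtain ⟨hP⟩ := h
      exact ⟨_, _, _, hP, rfl, .beta _ _ _⟩
    · obtain ⟨hP, hx, hv⟩ := h
      exact ⟨_, _, _, hP, rfl, .subst hx hv⟩
  exact ⟨P, V, r, ⟨hP, hp, hq.isFocusable, hq.live⟩, hq⟩

/-- determinism of Open CbNeed. -/
theorem StepOnd_deterministic :
    ∀ p q₁ q₂ : Program, StepOnd p q₁ → StepOnd p q₂ → q₁ = q₂ := by
  intro p q₁ q₂ h₁ h₂
  obtain ⟨P₁, V₁, r₁, F₁, hq₁⟩ := h₁.exists_focus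
  obtain ⟨P₂, V₂, r₂, F₂, hq₂⟩ := h₂.exists_focus
  rcases F₁.trichotomy F₂ with ⟨rfl, rfl, rfl⟩ | h | h
  · exact hq₁.unique hq₂
  · exact absurd h hq₁.not_passedOver
  · exact absurd h hq₂.not_passedOver
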